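/- arXiv:2002.07889 — 7 statements merged into one kernel-verified Lean document; each statement's English description precedes it below -/
import Mathlib

section
/- Let N ≥ 4 and let f be a map from size-N multisets of real numbers to ℝ (a non-identifying facility location mechanism on N reported locations). Suppose f is strategyproof w.r.t. manipulation: for every size-N multiset split as A + B (A the true locations controlled by one agent, B the locations of the others) and every multiset A′ of real numbers with |A′| = |A|, one has l(f(A + B), A) ≤ l(f(A′ + B), A). Then f is constant: there exists c ∈ ℝ with f(S) = c for every size-N multiset S of reals. -/
/-- The loss of a finite multiset `S` of reals at a point `x`:
`l(x,S) = ∑_{y ∈ S} |x - y|` (with multiplicity). -/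
noncomputable def loss (x : ℝ) (S : Multiset ℝ) : ℝ :=
  (S.map fun y => |x - y|).sum

/-- Left endpoint `t_⌈k/2⌉` of the median interval of a (nonempty) multiset of reals. -/
noncomputable def medLo (S : Multiset ℝ) : ℝ :=
  (S.sort (· ≤ ·)).getD ((S.card - 1) / 2) 0

/-- Right endpoint `t_{⌊k/2⌋+1}` of the median interval of a (nonempty) multiset of reals. -/
noncomputable def medHi (S : Multiset ℝ) : ℝ :=
  (S.sort (· ≤ ·)).getD (S.card / 2) 0

open Multiset in
theorem loss_rep (x a b : ℝ) (p q : ℕ) :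
    loss x (replicate p a + replicate q b) = p * |x - a| + q * |x - b| := by
  simp [loss]

open Multiset in
theorem loss_key (x a b : ℝ) (p q : ℕ) (h : q < p)
    (hl : loss x (replicate p a + replicate q b) ≤ loss a (replicate p a + replicate q b)) :
    x = a := by
  rw [loss_rep, loss_rep] at hl
  have h1 : |a - b| ≤ |x - a| + |x - b| := by
    have := abs_sub_le a x b
    rwa [abs_sub_comm a x] at this
  have h2 : (q : ℝ) + 1 ≤ p := by exact_mod_cast h
  have h3 : (0 : ℝ) ≤ q := Nat.cast_nonneg q
  have h4 := mul_le_mul_of_nonneg_left h1 h3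
  have h5 := mul_le_mul_of_nonneg_right h2 (abs_nonneg (x - a))
  simp only [sub_self, abs_zero, mul_zero, zero_add] at hl
  have h6 : |x - a| ≤ 0 := by nlinarith
  exact sub_eq_zero.mp (abs_nonpos_iff.mp h6)

open Multiset in
theorem maj_two (N : ℕ) (f : Multiset ℝ → ℝ)
    (hsp : ∀ A B A' : Multiset ℝ, (A + B).card = N → A'.card = A.card →
      loss (f (A + B)) A ≤ loss (f (A' + B)) A)
    (T : Multiset ℝ) (hT : T.card = N) (b : ℝ) (p q : ℕ) (hp : 2 ≤ p) (hq : q < p + 1)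
    (hpq : p + (q + 1) = N) :
    f (replicate p (f T) + replicate (q + 1) b) = f T := by
  have maj : f (replicate (p + 1) (f T) + replicate q b) = f T := by
    apply loss_key _ _ b (p + 1) q hq
    have := hsp (replicate (p + 1) (f T) + replicate q b) 0 T (by simp; omega) (by simp; omega)
    simpa using this
  apply loss_key _ _ b p 1 (by omega)
  have := hsp (replicate p (f T) + replicate 1 b) (replicate q b) (replicate (p + 1) (f T))
    (by simp; omega) (by simp)
  rw [maj, add_assoc, ← replicate_add, add_comm 1 q] at this
  exact this

/-- with non-identifying locations, any mechanism on  reported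
locations that is strategyproof w.r.t. manipulation must be constant. -/
theorem stmt_1 (N : ℕ) (hN : 4 ≤ N) (f : Multiset ℝ → ℝ)
    (hsp : ∀ A B A' : Multiset ℝ, (A + B).card = N → A'.card = A.card →
      loss (f (A + B)) A ≤ loss (f (A' + B)) A) :
    ∃ c : ℝ, ∀ S : Multiset ℝ, S.card = N → f S = c := by
  refine ⟨f (Multiset.replicate N 0), fun S hS => ?_⟩
  obtain ⟨n, q, hn, hq, h1, h2⟩ : ∃ n q, 1 ≤ n ∧ n + 1 + (q + 1) = N ∧ q < n + 1 + 1 ∧ n < q + 2 ∧ 1 ≤ q :=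
    ⟨N / 2 - 1, N - N / 2 - 1, by omega, by omega, by omega, by omega, by omega⟩
  have e1 := maj_two N f hsp S hS (f (Multiset.replicate N 0)) (n + 1) q (by omega) (by omega) hq
  have e2 := maj_two N f hsp (Multiset.replicate N 0) (by simp) (f S) (q + 1) n
    (by omega) (by omega) (by omega)
  rw [add_comm, e1] at e2
  exact e2
end

section
/- Let f be a map from nonempty finite multisets of real numbers to ℝ (a non-identifying facility location mechanism). Suppose f is strategyproof w.r.t. manipulation, replication, and hiding: for every nonempty finite multiset A (an agent's true locations), every finite multiset B (the other agents' locations, possibly empty), and every nonempty finite multiset A′, one has l(f(A + B), A) ≤ l(f(A′ + B), A). Then there exists c ∈ ℝ with f(S) = c for every multiset S of reals with |S| ≥ 4. -/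
/-- with non-identifying locations, any mechanism on nonempty finite
multisets of reals that is strategyproof w.r.t. manipulation, replication and hiding
is constant on all multisets with at least 4 elements. -/
theorem stmt_2 (f : Multiset ℝ → ℝ)
    (hsp : ∀ A B A' : Multiset ℝ, A ≠ 0 → A' ≠ 0 →
      loss (f (A + B)) A ≤ loss (f (A' + B)) A) :
    ∃ c : ℝ, ∀ S : Multiset ℝ, 4 ≤ S.card → f S = c := by
  refine ⟨f {0}, fun S hS => ?_⟩
  have hS0 : S ≠ 0 := by
    rintro rfl
    simp at hS
  obtain ⟨a, ha⟩ : ∃ a, a = f S := ⟨_, rfl⟩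
  obtain ⟨b, hb⟩ : ∃ b, b = f {0} := ⟨_, rfl⟩
  rw [← ha, ← hb]
  -- with majority `a`, the optimal point of the range is `a`
  have h1 := hsp ({b} + {a, a}) 0 S (by simp) hS0
  -- with majority `b`, the optimal point of the range is `b`
  have h2 := hsp ({b, b, b} + {a, a}) 0 {0} (by simp) (by simp)
  -- an agent at `b` facing `{a, a}` may replicate
  have h3 := hsp {b} {a, a} {b, b, b} (by simp) (by simp)
  rw [add_zero, add_zero, ← ha] at h1
  rw [add_zero, add_zero, ← hb] at h2
  generalize f ({b} + {a, a}) = p at *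
  generalize f ({b, b, b} + {a, a}) = q at *
  simp [loss] at h1 h2 h3
  have e1 := abs_sub_le a q b
  have e2 := abs_sub_le a p b
  have e3 := abs_sub_comm a q
  have e4 := abs_sub_comm a p
  have e5 := abs_sub_comm a b
  have e6 := abs_nonneg (q - b)
  have e7 := abs_nonneg (p - a)
  have e8 : |a - b| ≤ 0 := by linarith
  have e9 := abs_nonpos_iff.mp e8
  linarith
end

section
/- Let π be a mechanism for n agents (each reporting a nonempty finite multiset of reals) that is anonymous and strategyproof w.r.t. manipulation, replication, and hiding. Then for every agent i, every fixed tuple D_{−i} of the other agents' reports, and all reals y0 ≤ y1, one of the following holds: either π(D_i, D_{−i}) ∈ [y0,y1] for every nonempty finite multiset D_i with med(D_i) = [y0,y1]; or there exist s, h ∈ ℝ with (s < y0 ≤ y1 < h or s = h) such that for every nonempty finite multiset D_i with med(D_i) = [y0,y1]: π(D_i,D_{−i}) = s if l(s,D_i) < l(h,D_i), π(D_i,D_{−i}) = h if l(s,D_i) > l(h,D_i), and π(D_i,D_{−i}) ∈ {s,h} if l(s,D_i) = l(h,D_i). -/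
/-- A mechanism is anonymous if its value is invariant under every permutation of the
agents' reported multisets (on profiles of nonempty multisets). -/
def Anonymous (n : ℕ) (π : (Fin n → Multiset ℝ) → ℝ) : Prop :=
  ∀ D : Fin n → Multiset ℝ, (∀ j, D j ≠ 0) →
    ∀ σ : Equiv.Perm (Fin n), π (D ∘ σ) = π D

/-- A mechanism is strategyproof w.r.t. manipulation, replication and hiding if no agent
can strictly decrease her loss by replacing her report with an arbitrary nonempty
finite multiset. -/
def Strategyproof (n : ℕ) (π : (Fin n → Multiset ℝ) → ℝ) : Prop :=
  ∀ (i : Fin n) (D : Fin n → Multiset ℝ), (∀ j, D j ≠ 0) →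
    ∀ Di' : Multiset ℝ, Di' ≠ 0 →
      loss (π D) (D i) ≤ loss (π (Function.update D i Di')) (D i)

/-- A mechanism is efficient if its output is always Pareto optimal. -/
def Efficient (n : ℕ) (π : (Fin n → Multiset ℝ) → ℝ) : Prop :=
  ∀ D : Fin n → Multiset ℝ, (∀ j, D j ≠ 0) →
    ¬ ∃ x : ℝ, (∀ j, loss x (D j) ≤ loss (π D) (D j)) ∧
        ∃ j, loss x (D j) < loss (π D) (D j)

open Classical in
theorem loss_down (x x' : ℝ) (h : x < x') (S : Multiset ℝ) :
    (x' - x) * (2 * (S.countP (fun y => x' ≤ y) : ℝ) - S.card) ≤ loss x S - loss x' S := by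
  induction S using Multiset.induction with
  | empty => simp [loss]
  | cons a S ih =>
    simp only [loss, Multiset.map_cons, Multiset.sum_cons, Multiset.card_cons,
      Multiset.countP_cons] at ih ⊢
    by_cases ha : x' ≤ a
    · simp only [ha, if_true]
      push_cast
      rw [abs_of_nonpos (by linarith : x - a ≤ 0), abs_of_nonpos (by linarith : x' - a ≤ 0)]
      linarith
    · simp only [ha, if_false]
      push_cast
      have := abs_sub_abs_le_abs_sub (x' - a) (x - a)
      rw [show x' - a - (x - a) = x' - x by ring, abs_of_pos (by linarith : 0 < x' - x)] at this
      linarith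

open Classical in
theorem loss_up (x x' : ℝ) (h : x < x') (S : Multiset ℝ) :
    (x' - x) * (2 * (S.countP (fun y => y ≤ x) : ℝ) - S.card) ≤ loss x' S - loss x S := by
  induction S using Multiset.induction with
  | empty => simp [loss]
  | cons a S ih =>
    simp only [loss, Multiset.map_cons, Multiset.sum_cons, Multiset.card_cons,
      Multiset.countP_cons] at ih ⊢
    by_cases ha : a ≤ x
    · simp only [ha, if_true]
      push_cast
      rw [abs_of_nonneg (by linarith : 0 ≤ x - a), abs_of_nonneg (by linarith : 0 ≤ x' - a)]
      linarith
    · simp only [ha, if_false]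
      push_cast
      have := abs_sub_abs_le_abs_sub (x - a) (x' - a)
      rw [show x - a - (x' - a) = -(x' - x) by ring, abs_neg,
        abs_of_pos (by linarith : 0 < x' - x)] at this
      linarith

open Classical in
theorem count_ge (S : Multiset ℝ) (m : ℕ) (hm : m < S.card) (x : ℝ)
    (hx : x ≤ (S.sort (· ≤ ·)).getD m 0) : S.card - m ≤ S.countP (fun y => x ≤ y) := by
  have hs : (S.sort (· ≤ ·)).Pairwise (· ≤ ·) := Multiset.pairwise_sort S (· ≤ ·)
  have hl : (S.sort (· ≤ ·)).length = S.card := Multiset.length_sort ..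
  have hc : S.countP (fun y => x ≤ y) = (S.sort (· ≤ ·)).countP (fun y => x ≤ y) := by
    conv_lhs => rw [← Multiset.sort_eq S (· ≤ ·)]
    rw [Multiset.coe_countP]
  rw [hc, ← hl]
  rw [← hl] at hm
  generalize S.sort (· ≤ ·) = L at *
  rw [List.getD_eq_getElem _ _ hm] at hx
  rw [← List.length_drop]
  refine le_trans (le_of_eq ?_) ((List.drop_sublist m L).countP_le)
  symm
  rw [List.countP_eq_length]
  intro a ha
  obtain ⟨j, hj, rfl⟩ := List.mem_iff_getElem.1 ha
  rw [List.getElem_drop]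
  simp only [decide_eq_true_eq]
  refine hx.trans ?_
  rcases Nat.eq_zero_or_pos j with rfl | hj0
  · simp
  · exact List.pairwise_iff_getElem.1 hs _ _ _ _ (by omega)

open Classical in
theorem count_le (S : Multiset ℝ) (m : ℕ) (hm : m < S.card) (x : ℝ)
    (hx : (S.sort (· ≤ ·)).getD m 0 ≤ x) : m + 1 ≤ S.countP (fun y => y ≤ x) := by
  have hs : (S.sort (· ≤ ·)).Pairwise (· ≤ ·) := Multiset.pairwise_sort S (· ≤ ·)
  have hl : (S.sort (· ≤ ·)).length = S.card := Multiset.length_sort ..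
  have hc : S.countP (fun y => y ≤ x) = (S.sort (· ≤ ·)).countP (fun y => y ≤ x) := by
    conv_lhs => rw [← Multiset.sort_eq S (· ≤ ·)]
    rw [Multiset.coe_countP]
  rw [hc]
  rw [← hl] at hm
  generalize S.sort (· ≤ ·) = L at *
  rw [List.getD_eq_getElem _ _ hm] at hx
  have h1 : (L.take (m+1)).length = m + 1 := by rw [List.length_take]; omega
  have h2 : (L.take (m+1)).countP (fun y => y ≤ x) = (L.take (m+1)).length := by
    rw [List.countP_eq_length]
    intro a ha
    obtain ⟨j, hj, rfl⟩ := List.mem_iff_getElem.1 ha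
    rw [List.getElem_take]
    simp only [decide_eq_true_eq]
    refine le_trans ?_ hx
    rcases Nat.lt_or_ge j m with hjm | hjm
    · exact List.pairwise_iff_getElem.1 hs _ _ _ _ hjm
    · have : j = m := by omega
      subst this
      exact le_rfl
  calc m + 1 = (L.take (m+1)).countP (fun y => y ≤ x) := by rw [h2, h1]
    _ ≤ _ := (List.take_sublist (m+1) L).countP_le

theorem loss_lt_left (S : Multiset ℝ) (hS : S ≠ 0) (x x' : ℝ) (h : x < x')
    (hx : x' ≤ medLo S) : loss x' S < loss x S := by
  classical
  have hk : 0 < S.card := Multiset.card_pos.2 hS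
  have h1 := count_ge S _ (by omega) x' hx
  have h2 := loss_down x x' h S
  have h3 : S.card + 1 ≤ 2 * S.countP (fun y => x' ≤ y) := by omega
  have h4 : (S.card : ℝ) + 1 ≤ 2 * (S.countP (fun y => x' ≤ y) : ℝ) := by exact_mod_cast h3
  nlinarith

theorem loss_le_left (S : Multiset ℝ) (hS : S ≠ 0) (x x' : ℝ) (h : x ≤ x')
    (hx : x' ≤ medHi S) : loss x' S ≤ loss x S := by
  classical
  rcases h.eq_or_lt with rfl | h
  · exact le_rfl
  have hk : 0 < S.card := Multiset.card_pos.2 hS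
  have h1 := count_ge S _ (by omega) x' hx
  have h2 := loss_down x x' h S
  have h3 : S.card ≤ 2 * S.countP (fun y => x' ≤ y) := by omega
  have h4 : (S.card : ℝ) ≤ 2 * (S.countP (fun y => x' ≤ y) : ℝ) := by exact_mod_cast h3
  nlinarith

theorem loss_lt_right (S : Multiset ℝ) (hS : S ≠ 0) (x x' : ℝ) (h : x < x')
    (hx : medHi S ≤ x) : loss x S < loss x' S := by
  classical
  have hk : 0 < S.card := Multiset.card_pos.2 hS
  have h1 := count_le S _ (by omega) x hx
  have h2 := loss_up x x' h S
  have h3 : S.card + 1 ≤ 2 * S.countP (fun y => y ≤ x) := by omega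
  have h4 : (S.card : ℝ) + 1 ≤ 2 * (S.countP (fun y => y ≤ x) : ℝ) := by exact_mod_cast h3
  nlinarith

theorem loss_le_right (S : Multiset ℝ) (hS : S ≠ 0) (x x' : ℝ) (h : x ≤ x')
    (hx : medLo S ≤ x) : loss x S ≤ loss x' S := by
  classical
  rcases h.eq_or_lt with rfl | h
  · exact le_rfl
  have hk : 0 < S.card := Multiset.card_pos.2 hS
  have h1 := count_le S _ (by omega) x hx
  have h2 := loss_up x x' h S
  have h3 : S.card ≤ 2 * S.countP (fun y => y ≤ x) := by omega
  have h4 : (S.card : ℝ) ≤ 2 * (S.countP (fun y => y ≤ x) : ℝ) := by exact_mod_cast h3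
  nlinarith


/-- Lemma 2 of the paper: for an anonymous mechanism that is strategyproof
w.r.t. manipulation, replication and hiding, fixing the other agents' reports and the
median interval `[y0,y1]` of agent `i`'s report, either the output always lies in
`[y0,y1]`, or there are `s,h` with `s < y0 ≤ y1 < h` or `s = h` realizing Eqn. (4). -/
theorem stmt_3 (n : ℕ) (π : (Fin n → Multiset ℝ) → ℝ)
    (hanon : Anonymous n π) (hsp : Strategyproof n π)
    (i : Fin n) (D : Fin n → Multiset ℝ) (hD : ∀ j, j ≠ i → D j ≠ 0)
    (y0 y1 : ℝ) (hy : y0 ≤ y1) :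
    (∀ Di : Multiset ℝ, Di ≠ 0 → medLo Di = y0 → medHi Di = y1 →
        π (Function.update D i Di) ∈ Set.Icc y0 y1) ∨
    (∃ s h : ℝ, (s < y0 ∧ y1 < h ∨ s = h) ∧
      ∀ Di : Multiset ℝ, Di ≠ 0 → medLo Di = y0 → medHi Di = y1 →
        (loss s Di < loss h Di → π (Function.update D i Di) = s) ∧
        (loss h Di < loss s Di → π (Function.update D i Di) = h) ∧
        (loss s Di = loss h Di →
          π (Function.update D i Di) = s ∨ π (Function.update D i Di) = h)) := by
  have sp : ∀ S T : Multiset ℝ, S ≠ 0 → T ≠ 0 →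
      loss (π (Function.update D i S)) S ≤ loss (π (Function.update D i T)) S := by
    intro S T hS hT
    have := hsp i (Function.update D i S) (by
      intro j
      by_cases hj : j = i
      · subst hj; simpa using hS
      · simpa [hj] using hD j hj) T hT
    simpa using this
  generalize hf : (fun S => π (Function.update D i S)) = f
  have hf' : ∀ S, π (Function.update D i S) = f S := fun S => by rw [← hf]
  simp only [hf'] at sp ⊢
  by_cases hall : ∀ Di : Multiset ℝ, Di ≠ 0 → medLo Di = y0 → medHi Di = y1 →
      f Di ∈ Set.Icc y0 y1
  · exact Or.inl hall
  right
  push Not at hall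
  obtain ⟨S0, hS0, hlo0, hhi0, hout⟩ := hall
  -- no value lies in the median interval
  have hno : ∀ T : Multiset ℝ, T ≠ 0 → f T < y0 ∨ y1 < f T := by
    intro T hT
    by_contra hc
    push Not at hc
    have h1 := sp S0 T hS0 hT
    rcases lt_or_ge (f S0) y0 with h | h
    · have h2 := loss_lt_left S0 hS0 (f S0) y0 h hlo0.ge
      have h3 := loss_le_left S0 hS0 y0 (f T) hc.1 (by rw [hhi0]; exact hc.2)
      linarith
    · have h' : y1 < f S0 := by
        by_contra h''
        exact hout ⟨h, not_lt.1 h''⟩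
      have h2 := loss_lt_right S0 hS0 y1 (f S0) h' hhi0.le
      have h3 := loss_le_right S0 hS0 (f T) y1 hc.2 (by rw [hlo0]; exact hc.1)
      linarith
  have hleL : ∀ S T : Multiset ℝ, S ≠ 0 → T ≠ 0 → medLo S = y0 →
      f S < y0 → f T < y0 → f T ≤ f S := by
    intro S T hS hT hm _ hb
    by_contra hc
    have := loss_lt_left S hS (f S) (f T) (not_le.1 hc) (by rw [hm]; exact hb.le)
    linarith [sp S T hS hT]
  have hleR : ∀ S T : Multiset ℝ, S ≠ 0 → T ≠ 0 → medHi S = y1 →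
      y1 < f S → y1 < f T → f S ≤ f T := by
    intro S T hS hT hm _ hb
    by_contra hc
    have := loss_lt_right S hS (f T) (f S) (not_le.1 hc) (by rw [hm]; exact hb.le)
    linarith [sp S T hS hT]
  by_cases hA : ∃ A : Multiset ℝ, A ≠ 0 ∧ medLo A = y0 ∧ medHi A = y1 ∧ f A < y0
  · obtain ⟨A, hA0, hAl, hAh, hA⟩ := hA
    by_cases hB : ∃ B : Multiset ℝ, B ≠ 0 ∧ medLo B = y0 ∧ medHi B = y1 ∧ y1 < f B
    · obtain ⟨B, hB0, hBl, hBh, hB⟩ := hB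
      refine ⟨f A, f B, Or.inl ⟨hA, hB⟩, ?_⟩
      intro S hS hl hh
      have hor : f S = f A ∨ f S = f B := by
        rcases hno S hS with h | h
        · exact Or.inl (le_antisymm (hleL A S hA0 hS hAl hA h) (hleL S A hS hA0 hl h hA))
        · exact Or.inr (le_antisymm (hleR S B hS hB0 hh h hB) (hleR B S hB0 hS hBh hB h))
      have hSA := sp S A hS hA0
      have hSB := sp S B hS hB0
      refine ⟨fun hlt => ?_, fun hlt => ?_, fun _ => hor⟩
      · rcases hor with h | h
        · exact h
        · rw [h] at hSA; linarith
      · rcases hor with h | h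
        · rw [h] at hSB; linarith
        · exact h
    · refine ⟨f A, f A, Or.inr rfl, ?_⟩
      intro S hS hl hh
      have he : f S = f A := by
        rcases hno S hS with h | h
        · exact le_antisymm (hleL A S hA0 hS hAl hA h) (hleL S A hS hA0 hl h hA)
        · exact absurd ⟨S, hS, hl, hh, h⟩ hB
      exact ⟨fun _ => he, fun _ => he, fun _ => Or.inl he⟩
  · have h0 : y1 < f S0 := by
      rcases hno S0 hS0 with h | h
      · exact absurd ⟨S0, hS0, hlo0, hhi0, h⟩ hA
      · exact h
    refine ⟨f S0, f S0, Or.inr rfl, ?_⟩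
    intro S hS hl hh
    have he : f S = f S0 := by
      rcases hno S hS with h | h
      · exact absurd ⟨S, hS, hl, hh, h⟩ hA
      · exact le_antisymm (hleR S S0 hS hS0 hh h h0) (hleR S0 S hS0 hS hhi0 h0 h)
    exact ⟨fun _ => he, fun _ => he, fun _ => Or.inl he⟩
end

section
/- Let π be a mechanism for n agents that is anonymous, efficient, and strategyproof w.r.t. manipulation, replication, and hiding. Then there do NOT exist an agent i, a tuple D_{−i} of the other agents' reports, reals y0 ≤ y1, and s, h ∈ ℝ with s < y0 ≤ y1 < h, such that for every nonempty finite multiset D_i with med(D_i) = [y0,y1]: π(D_i,D_{−i}) = s if l(s,D_i) < l(h,D_i), π(D_i,D_{−i}) = h if l(s,D_i) > l(h,D_i), and π(D_i,D_{−i}) ∈ {s,h} otherwise. -/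
theorem loss_conv (S : Multiset ℝ) (u v w : ℝ) (h1 : u ≤ v) (h2 : v ≤ w) :
    (w - u) * loss v S ≤ (w - v) * loss u S + (v - u) * loss w S := by
  unfold loss
  induction S using Multiset.induction with
  | empty => simp
  | cons t S ih =>
    simp only [Multiset.map_cons, Multiset.sum_cons]
    have key : (w - u) * |v - t| ≤ (w - v) * |u - t| + (v - u) * |w - t| := by
      have e : (w - u) * (v - t) = (w - v) * (u - t) + (v - u) * (w - t) := by ring
      have hwu : 0 ≤ w - u := by linarith
      have e2 : (w - u) * |v - t| = |(w - u) * (v - t)| := by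
        rw [abs_mul, abs_of_nonneg hwu]
      rw [e2, e]
      refine (abs_add_le _ _).trans ?_
      rw [abs_mul, abs_mul, abs_of_nonneg (sub_nonneg.2 h1), abs_of_nonneg (sub_nonneg.2 h2)]
    linarith

/-- `S` has a strict single peak at `y`. -/
def Peak (S : Multiset ℝ) (y : ℝ) : Prop :=
  S ≠ 0 ∧ (∀ x x', y ≤ x → x < x' → loss x S < loss x' S) ∧
    (∀ x x', x < x' → x' ≤ y → loss x' S < loss x S)

theorem loss_mk (x y c : ℝ) (k : ℕ) :
    loss x (Multiset.replicate (k + 1) y + Multiset.replicate k c) =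
      (k + 1) * |x - y| + k * |x - c| := by
  simp [loss, Multiset.map_replicate, Multiset.sum_replicate]
  ring

theorem peak_mk (y c : ℝ) (k : ℕ) :
    Peak (Multiset.replicate (k + 1) y + Multiset.replicate k c) y := by
  have hk : (0 : ℝ) ≤ k := Nat.cast_nonneg k
  refine ⟨?_, ?_, ?_⟩
  · intro h
    have := congrArg Multiset.card h
    simp at this
  · intro x x' h1 h2
    rw [loss_mk, loss_mk, abs_of_nonneg (by linarith : 0 ≤ x - y),
      abs_of_nonneg (by linarith : 0 ≤ x' - y)]
    have : |x - c| ≤ (x' - x) + |x' - c| := by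
      have := abs_sub_le x x' c
      rw [abs_sub_comm x x', abs_of_pos (sub_pos.2 h2)] at this
      exact this
    have := mul_le_mul_of_nonneg_left this hk
    nlinarith
  · intro x x' h1 h2
    rw [loss_mk, loss_mk, abs_of_nonpos (by linarith : x - y ≤ 0),
      abs_of_nonpos (by linarith : x' - y ≤ 0)]
    have : |x' - c| ≤ (x' - x) + |x - c| := by
      have := abs_sub_le x' x c
      rw [abs_of_pos (sub_pos.2 h1)] at this
      exact this
    have := mul_le_mul_of_nonneg_left this hk
    nlinarith

theorem exists_nat_mul (e M : ℝ) (he : 0 < e) : ∃ k : ℕ, M < k * e := by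
  obtain ⟨k, hk⟩ := exists_nat_gt (M / e)
  exact ⟨k, (div_lt_iff₀ he).1 hk⟩

theorem exists_peak_left (a y b : ℝ) (h1 : a < y) (h2 : y < b) :
    ∃ Y, Peak Y y ∧ loss a Y < loss b Y := by
  obtain ⟨k, hk⟩ := exists_nat_mul (b - y) (y - a) (by linarith)
  refine ⟨_, peak_mk y a k, ?_⟩
  have hk0 : (0 : ℝ) ≤ k := Nat.cast_nonneg k
  rw [loss_mk, loss_mk, sub_self, abs_zero, abs_of_neg (by linarith), abs_of_pos (by linarith),
    abs_of_pos (by linarith)]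
  nlinarith

theorem exists_peak_right (a y b : ℝ) (h1 : a < y) (h2 : y < b) :
    ∃ Y, Peak Y y ∧ loss b Y < loss a Y := by
  obtain ⟨k, hk⟩ := exists_nat_mul (y - a) (b - y) (by linarith)
  refine ⟨_, peak_mk y b k, ?_⟩
  have hk0 : (0 : ℝ) ≤ k := Nat.cast_nonneg k
  rw [loss_mk, loss_mk, sub_self, abs_zero, abs_of_neg (by linarith : a - y < 0),
    abs_of_pos (by linarith : 0 < b - y), abs_of_neg (by linarith : a - b < 0)]
  nlinarith

/-- The set of options of agent `i` contains `s` and `h` but nothing strictly between. -/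
def Hole {n : ℕ} (π : (Fin n → Multiset ℝ) → ℝ) (s h : ℝ) (i : Fin n)
    (D : Fin n → Multiset ℝ) : Prop :=
  (∃ A, A ≠ 0 ∧ π (Function.update D i A) = s) ∧
  (∃ A, A ≠ 0 ∧ π (Function.update D i A) = h) ∧
  ∀ A, A ≠ 0 → s < π (Function.update D i A) → π (Function.update D i A) < h → False

theorem upd_ne {n : ℕ} {D : Fin n → Multiset ℝ} (hD : ∀ j, D j ≠ 0) (i : Fin n)
    {A : Multiset ℝ} (hA : A ≠ 0) : ∀ j, Function.update D i A j ≠ 0 := by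
  intro j
  by_cases hj : j = i
  · subst hj; simpa using hA
  · simpa [Function.update_of_ne hj] using hD j

theorem sp' {n : ℕ} {π : (Fin n → Multiset ℝ) → ℝ} (hsp : Strategyproof n π)
    (i : Fin n) (D : Fin n → Multiset ℝ) (hD : ∀ j, D j ≠ 0) {A B : Multiset ℝ}
    (hA : A ≠ 0) (hB : B ≠ 0) :
    loss (π (Function.update D i A)) A ≤ loss (π (Function.update D i B)) A := by
  have := hsp i (Function.update D i A) (upd_ne hD i hA) B hB
  simpa using this

theorem hole_out {n : ℕ} {π : (Fin n → Multiset ℝ) → ℝ} (hsp : Strategyproof n π)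
    {s h : ℝ} {i : Fin n} {D : Fin n → Multiset ℝ} (hD : ∀ j, D j ≠ 0)
    (H : Hole π s h i D) {Y : Multiset ℝ} {y : ℝ} (hY : Peak Y y) (h1 : s < y) (h2 : y < h) :
    (loss s Y < loss h Y → π (Function.update D i Y) = s) ∧
    (loss h Y < loss s Y → π (Function.update D i Y) = h) := by
  obtain ⟨⟨A, hA, eA⟩, ⟨B, hB, eB⟩, hno⟩ := H
  have a1 := sp' hsp i D hD hY.1 hA
  have a2 := sp' hsp i D hD hY.1 hB
  have a3 := hno Y hY.1
  rw [eA] at a1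
  rw [eB] at a2
  set o := π (Function.update D i Y)
  have h3 : s ≤ o := by
    by_contra hc
    have := hY.2.2 o s (by linarith) (by linarith)
    linarith
  have h4 : o ≤ h := by
    by_contra hc
    have := hY.2.1 h o (by linarith) (by linarith)
    linarith
  rcases h3.eq_or_lt with e | l
  · refine ⟨fun _ => e.symm, fun hh => ?_⟩
    rw [← e] at a2; linarith
  · rcases h4.eq_or_lt with e | l'
    · refine ⟨fun hh => ?_, fun _ => e⟩
      rw [e] at a1; linarith
    · exact (a3 l l').elim

open Classical in
theorem no_hole {n : ℕ} {π : (Fin n → Multiset ℝ) → ℝ} (heff : Efficient n π)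
    (hsp : Strategyproof n π) {s y h : ℝ} (h1 : s < y) (h2 : y < h) (N : ℕ) :
    ∀ (i : Fin n) (D : Fin n → Multiset ℝ), (∀ j, D j ≠ 0) → Hole π s h i D →
      (Finset.univ.filter fun j => j ≠ i ∧ ∃ z, y < z ∧ loss z (D j) < loss y (D j)).card < N →
      False := by
  induction N with
  | zero => intro i D _ _ hc; omega
  | succ N ih =>
  intro i D hD H hc
  obtain ⟨Yp, hYp, hYp'⟩ := exists_peak_right s y h h1 h2
  have oYp := (hole_out hsp hD H hYp h1 h2).2 hYp'
  by_cases hF : ∃ k, k ≠ i ∧ ∃ z, y < z ∧ loss z (D k) < loss y (D k)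
  swap
  · push Not at hF
    refine heff (Function.update D i Yp) (upd_ne hD i hYp.1) ⟨y, ?_, i, ?_⟩
    · intro j
      rw [oYp]
      by_cases hj : j = i
      · subst hj
        simpa using (hYp.2.1 y h le_rfl h2).le
      · rw [Function.update_of_ne hj]
        exact hF j hj h h2
    · rw [oYp]
      simpa using hYp.2.1 y h le_rfl h2
  obtain ⟨k, hki, z, hz, hzk⟩ := hF
  have hys : loss y (D k) < loss s (D k) := by
    have := loss_conv (D k) s y z h1.le hz.le
    nlinarith
  have hDk : ∀ v, s < v → v ≤ y → loss v (D k) < loss s (D k) := by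
    intro v hv1 hv2
    have := loss_conv (D k) s v y hv1.le hv2
    nlinarith
  obtain ⟨x0, hx1, hx2⟩ := exists_between h1
  obtain ⟨X, hX, hX'⟩ := exists_peak_left s x0 y hx1 hx2
  have hcomm : ∀ A B : Multiset ℝ, Function.update (Function.update D k A) i B =
      Function.update (Function.update D i B) k A := fun A B =>
    Function.update_comm hki _ _ _
  have hself : ∀ B : Multiset ℝ, Function.update (Function.update D i B) k (D k) =
      Function.update D i B := by
    intro B
    rw [← hcomm, Function.update_eq_self]
  set D' := Function.update D k X with hD'
  have hD'0 : ∀ j, D' j ≠ 0 := upd_ne hD k hX.1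
  -- reports for which the output was `s` still give `s`
  have step1 : ∀ Y : Multiset ℝ, Y ≠ 0 → π (Function.update D i Y) = s →
      π (Function.update D' i Y) = s := by
    intro Y hY e
    have b1 := sp' hsp k (Function.update D i Y) (upd_ne hD i hY) hX.1 (hD k)
    have b2 := sp' hsp k (Function.update D i Y) (upd_ne hD i hY) (hD k) hX.1
    rw [hself, e, ← hcomm] at b1 b2
    set w := π (Function.update D' i Y)
    have c1 : s ≤ w := by
      by_contra hc
      have := hX.2.2 w s (by linarith) hx1.le
      linarith
    have c2 : w ≤ y := by
      by_contra hc
      have := hX.2.1 y w hx2.le (by linarith)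
      linarith
    by_contra hne
    have := hDk w (lt_of_le_of_ne c1 (Ne.symm hne)) c2
    linarith
  obtain ⟨Ym, hYm, hYm'⟩ := exists_peak_left s y h h1 h2
  have sO : π (Function.update D' i Ym) = s :=
    step1 Ym hYm.1 ((hole_out hsp hD H hYm h1 h2).1 hYm')
  have gap : ∀ A, A ≠ 0 → s < π (Function.update D' i A) →
      π (Function.update D' i A) < h → False := by
    intro A hA l1 l2
    obtain ⟨Y, hY, hY'⟩ := exists_peak_left s _ h l1 l2
    have e := step1 Y hY.1 ((hole_out hsp hD H hY l1 l2).1 hY')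
    have := sp' hsp i D' hD'0 hY.1 hA
    rw [e] at this
    have := hY.2.2 _ _ l1 le_rfl
    linarith
  have hkF : k ∈ Finset.univ.filter
      fun j => j ≠ i ∧ ∃ z, y < z ∧ loss z (D j) < loss y (D j) := by
    simp only [Finset.mem_filter, Finset.mem_univ, true_and]
    exact ⟨hki, z, hz, hzk⟩
  by_cases hh : ∃ A, A ≠ 0 ∧ π (Function.update D' i A) = h
  · refine ih i D' hD'0 ⟨⟨Ym, hYm.1, sO⟩, hh, gap⟩ ?_
    refine lt_of_lt_of_le (Finset.card_lt_card (Finset.ssubset_iff_subset_ne.2 ⟨?_, ?_⟩))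
      (Nat.lt_succ_iff.1 hc)
    · intro j hj
      simp only [Finset.mem_filter, Finset.mem_univ, true_and] at hj ⊢
      obtain ⟨hj1, z', hz1, hz2⟩ := hj
      refine ⟨hj1, z', hz1, ?_⟩
      by_cases hjk : j = k
      · subst hjk
        simp only [hD', Function.update_self] at hz2
        have := hX.2.1 y z' hx2.le hz1
        linarith
      · simpa [hD', Function.update_of_ne hjk] using hz2
    · intro heq
      rw [← heq] at hkF
      simp only [Finset.mem_filter, Finset.mem_univ, true_and] at hkF
      obtain ⟨_, z', hz1, hz2⟩ := hkF
      simp only [hD', Function.update_self] at hz2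
      have := hX.2.1 y z' hx2.le hz1
      linarith
  · push Not at hh
    have oX : π (Function.update D' i Yp) = s := by
      have b1 := sp' hsp k (Function.update D i Yp) (upd_ne hD i hYp.1) hX.1 (hD k)
      rw [hself, oYp, ← hcomm] at b1
      have b2 := sp' hsp i D' hD'0 hYp.1 hYm.1
      rw [sO] at b2
      have b3 := gap Yp hYp.1
      have b4 := hh Yp hYp.1
      change loss (π (Function.update D' i Yp)) X ≤ _ at b1
      set w := π (Function.update D' i Yp)
      have c1 : s ≤ w := by
        by_contra hc
        have := hYp.2.2 w s (by linarith) h1.le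
        linarith
      have c2 : w ≤ h := by
        by_contra hc
        have := hX.2.1 h w (by linarith) (by linarith)
        linarith
      by_contra hne
      exact b3 (lt_of_le_of_ne c1 (Ne.symm hne)) (lt_of_le_of_ne c2 b4)
    have oX' : π (Function.update (Function.update D i Yp) k X) = s := by rw [← hcomm]; exact oX
    have hhs : loss h (D k) ≤ loss s (D k) := by
      have := sp' hsp k (Function.update D i Yp) (upd_ne hD i hYp.1) (hD k) hX.1
      rwa [hself, oYp, oX'] at this
    have hDk2 : ∀ v, s < v → v < h → loss v (D k) < loss s (D k) := by
      intro v hv1 hv2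
      rcases le_or_gt v y with hv | hv
      · exact hDk v hv1 hv
      · have := loss_conv (D k) y v h hv.le hv2.le
        nlinarith
    refine ih k (Function.update D i Yp) (upd_ne hD i hYp.1)
      ⟨⟨X, hX.1, oX'⟩, ⟨D k, hD k, by rw [hself, oYp]⟩, ?_⟩ ?_
    · intro Z hZ l1 l2
      set v := π (Function.update (Function.update D i Yp) k Z) with hv
      obtain ⟨Y, hY, hY'⟩ := exists_peak_left s v h l1 l2
      have e := (hole_out hsp hD H hY l1 l2).1 hY'
      have b1 := sp' hsp i (Function.update D k Z) (upd_ne hD k hZ) hY.1 hYp.1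
      rw [hcomm, hcomm, ← hv] at b1
      have b2 := sp' hsp k (Function.update D i Y) (upd_ne hD i hY.1) (hD k) hZ
      rw [hself, e] at b2
      have e2 : π (Function.update (Function.update D i Y) k Z) = v := by
        rcases lt_trichotomy (π (Function.update (Function.update D i Y) k Z)) v with l | e | l
        · have := hY.2.2 _ _ l le_rfl
          linarith
        · exact e
        · have := hY.2.1 _ _ le_rfl l
          linarith
      rw [e2] at b2
      have := hDk2 v l1 l2
      linarith
    · refine lt_of_lt_of_le (Finset.card_lt_card (Finset.ssubset_iff_subset_ne.2 ⟨?_, ?_⟩))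
        (Nat.lt_succ_iff.1 hc)
      · intro j hj
        simp only [Finset.mem_filter, Finset.mem_univ, true_and] at hj ⊢
        obtain ⟨hj1, z', hz1, hz2⟩ := hj
        by_cases hji : j = i
        · subst hji
          simp only [Function.update_self] at hz2
          have := hYp.2.1 y z' le_rfl hz1
          linarith
        · rw [Function.update_of_ne hji] at hz2
          exact ⟨hji, z', hz1, hz2⟩
      · intro heq
        rw [← heq] at hkF
        simp at hkF

theorem med_aux (L : List ℝ) (hL : L.Pairwise (· ≤ ·)) (k : ℕ) (hk : L.length = 2 * k + 2) :
    medLo (L : Multiset ℝ) = L.getD k 0 ∧ medHi (L : Multiset ℝ) = L.getD (k + 1) 0 := by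
  have e : (L : Multiset ℝ).sort (· ≤ ·) = L := by
    rw [Multiset.coe_sort]
    exact List.mergeSort_of_pairwise (by simpa using hL)
  unfold medLo medHi
  rw [e, Multiset.coe_card, hk]
  constructor <;> congr 1 <;> omega

theorem exists_low (s y0 y1 h : ℝ) (h0 : y0 ≤ y1) (h1 : s < y0) (h2 : y1 < h) :
    ∃ A : Multiset ℝ, A ≠ 0 ∧ medLo A = y0 ∧ medHi A = y1 ∧ loss s A < loss h A ∧
      ∀ z, s < z → z ≤ y1 → loss z A < loss s A ∧ loss z A < loss h A := by
  obtain ⟨k, hk⟩ := exists_nat_mul (h - y1) (y0 - s) (by linarith)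
  have hk0 : (0 : ℝ) ≤ k := Nat.cast_nonneg k
  have hl : ∀ x, loss x ((List.replicate k s ++ y0 :: List.replicate (k + 1) y1 : List ℝ) :
      Multiset ℝ) = k * |x - s| + |x - y0| + (k + 1) * |x - y1| := by
    intro x
    simp [loss]
    ring
  refine ⟨(List.replicate k s ++ y0 :: List.replicate (k + 1) y1 : List ℝ), by simp, ?_⟩
  obtain ⟨m1, m2⟩ := med_aux (List.replicate k s ++ y0 :: List.replicate (k + 1) y1)
    (by
      simp only [List.pairwise_append, List.pairwise_cons, List.pairwise_replicate,
        List.mem_replicate, List.mem_cons]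
      refine ⟨by simp, ⟨?_, by simp⟩, ?_⟩
      · rintro a ⟨_, rfl⟩; exact h0
      · rintro a ⟨_, rfl⟩ b (rfl | ⟨_, rfl⟩) <;> linarith) k (by simp; omega)
  refine ⟨by rw [m1]; simp [List.getD_append_right], by rw [m2]; simp [List.getD_append_right], ?_⟩
  have key : ∀ z, s ≤ z → z ≤ y1 → loss z ((List.replicate k s ++ y0 :: List.replicate (k + 1) y1 :
      List ℝ) : Multiset ℝ) < loss h ((List.replicate k s ++ y0 :: List.replicate (k + 1) y1 :
      List ℝ) : Multiset ℝ) := by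
    intro z hz1 hz2
    rw [hl, hl, abs_of_nonneg (sub_nonneg.2 hz1), abs_of_nonpos (sub_nonpos.2 hz2),
      abs_of_pos (by linarith : 0 < h - s), abs_of_pos (by linarith : 0 < h - y0),
      abs_of_pos (by linarith : 0 < h - y1)]
    rcases abs_cases (z - y0) with ⟨e, _⟩ | ⟨e, _⟩ <;> rw [e] <;> nlinarith
  refine ⟨key s le_rfl (by linarith), fun z hz1 hz2 => ⟨?_, key z hz1.le hz2⟩⟩
  rw [hl, hl, abs_of_nonneg (sub_nonneg.2 hz1.le), abs_of_nonpos (sub_nonpos.2 hz2), sub_self,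
    abs_zero, abs_of_neg (by linarith : s - y0 < 0), abs_of_neg (by linarith : s - y1 < 0)]
  rcases abs_cases (z - y0) with ⟨e, _⟩ | ⟨e, _⟩ <;> rw [e] <;> nlinarith

theorem exists_high (s y0 y1 h : ℝ) (h0 : y0 ≤ y1) (h1 : s < y0) (h2 : y1 < h) :
    ∃ A : Multiset ℝ, A ≠ 0 ∧ medLo A = y0 ∧ medHi A = y1 ∧ loss h A < loss s A ∧
      ∀ z, z < h → y0 ≤ z → loss z A < loss s A ∧ loss z A < loss h A := by
  obtain ⟨k, hk⟩ := exists_nat_mul (y0 - s) (h - y1) (by linarith)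
  have hk0 : (0 : ℝ) ≤ k := Nat.cast_nonneg k
  have hl : ∀ x, loss x ((List.replicate (k + 1) y0 ++ y1 :: List.replicate k h : List ℝ) :
      Multiset ℝ) = (k + 1) * |x - y0| + |x - y1| + k * |x - h| := by
    intro x
    simp [loss]
    ring
  refine ⟨(List.replicate (k + 1) y0 ++ y1 :: List.replicate k h : List ℝ), by simp, ?_⟩
  obtain ⟨m1, m2⟩ := med_aux (List.replicate (k + 1) y0 ++ y1 :: List.replicate k h)
    (by
      simp only [List.pairwise_append, List.pairwise_cons, List.pairwise_replicate,
        List.mem_replicate, List.mem_cons]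
      refine ⟨by simp, ⟨?_, by simp⟩, ?_⟩
      · rintro a ⟨_, rfl⟩; exact h2.le
      · rintro a ⟨_, rfl⟩ b (rfl | ⟨_, rfl⟩) <;> linarith) k (by simp; omega)
  refine ⟨by rw [m1, List.getD_append _ _ _ _ (by simp)]; simp,
    by rw [m2]; simp [List.getD_append_right], ?_⟩
  have key : ∀ z, z ≤ h → y0 ≤ z → loss z ((List.replicate (k + 1) y0 ++ y1 :: List.replicate k h :
      List ℝ) : Multiset ℝ) < loss s ((List.replicate (k + 1) y0 ++ y1 :: List.replicate k h :
      List ℝ) : Multiset ℝ) := by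
    intro z hz1 hz2
    rw [hl, hl, abs_of_nonneg (sub_nonneg.2 hz2), abs_of_nonpos (sub_nonpos.2 hz1),
      abs_of_neg (by linarith : s - h < 0), abs_of_neg (by linarith : s - y0 < 0),
      abs_of_neg (by linarith : s - y1 < 0)]
    rcases abs_cases (z - y1) with ⟨e, _⟩ | ⟨e, _⟩ <;> rw [e] <;> nlinarith
  refine ⟨key h le_rfl (by linarith), fun z hz1 hz2 => ⟨key z hz1.le hz2, ?_⟩⟩
  rw [hl, hl, abs_of_nonneg (sub_nonneg.2 hz2), abs_of_nonpos (sub_nonpos.2 hz1.le), sub_self,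
    abs_zero, abs_of_pos (by linarith : 0 < h - y0), abs_of_pos (by linarith : 0 < h - y1)]
  rcases abs_cases (z - y1) with ⟨e, _⟩ | ⟨e, _⟩ <;> rw [e] <;> nlinarith

/-- Lemma 3 of the paper: an anonymous, efficient mechanism that is
strategyproof w.r.t. manipulation, replication and hiding never has the genuine
two-output form of Eqn. (4) with `s < y0 ≤ y1 < h`. -/
theorem stmt_5 (n : ℕ) (π : (Fin n → Multiset ℝ) → ℝ)
    (hanon : Anonymous n π) (heff : Efficient n π) (hsp : Strategyproof n π) :
    ¬ ∃ (i : Fin n) (D : Fin n → Multiset ℝ) (y0 y1 s h : ℝ),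
      (∀ j, j ≠ i → D j ≠ 0) ∧ y0 ≤ y1 ∧ s < y0 ∧ y1 < h ∧
      ∀ Di : Multiset ℝ, Di ≠ 0 → medLo Di = y0 → medHi Di = y1 →
        (loss s Di < loss h Di → π (Function.update D i Di) = s) ∧
        (loss h Di < loss s Di → π (Function.update D i Di) = h) ∧
        (loss s Di = loss h Di →
          π (Function.update D i Di) = s ∨ π (Function.update D i Di) = h) := by
  rintro ⟨i, D, y0, y1, s, h, hD, h0, h1, h2, hyp⟩
  obtain ⟨A, hA, mA1, mA2, lA, zA⟩ := exists_low s y0 y1 h h0 h1 h2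
  obtain ⟨B, hB, mB1, mB2, lB, zB⟩ := exists_high s y0 y1 h h0 h1 h2
  have oA := (hyp A hA mA1 mA2).1 lA
  have oB := (hyp B hB mB1 mB2).2.1 lB
  have hE : ∀ j, Function.update D i A j ≠ 0 := by
    intro j
    by_cases hj : j = i
    · subst hj; simpa using hA
    · simpa [Function.update_of_ne hj] using hD j hj
  refine no_hole heff hsp h1 (lt_of_le_of_lt h0 h2) _ i (Function.update D i A) hE
    ⟨⟨A, hA, by simpa using oA⟩, ⟨B, hB, by simpa using oB⟩, ?_⟩ (Nat.lt_succ_self _)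
  intro Z hZ l1 l2
  have a1 := sp' hsp i _ hE hA hZ
  have a2 := sp' hsp i _ hE hB hZ
  simp only [Function.update_idem] at a1 a2 l1 l2
  rw [oA] at a1
  rw [oB] at a2
  rcases le_or_gt (π (Function.update D i Z)) y1 with hz | hz
  · have := (zA _ l1 hz).1
    linarith
  · have := (zB _ l2 (by linarith)).2
    linarith
end

section
/- Fix n ≥ 1 and extended reals α_1,…,α_{n−1} ∈ ℝ ∪ {−∞,+∞}. Restrict attention to profiles D = (D_1,…,D_n) in which every D_i is a nonempty finite multiset of reals whose median interval med(D_i) is a single point y_i* (each agent has a unique optimal location), and define π(D) = med(y_1*,…,y_n*,α_1,…,α_{n−1}), the n-th smallest of these 2n−1 extended-real values (always a real number). Then π is strong group strategyproof w.r.t. manipulation, replication, and hiding on this domain: there is no nonempty coalition S of agents, profile D in the domain, and family of nonempty finite multisets (D_j′)_{j∈S} each with a single-point median interval, such that l(π(D_S′, D_{−S}), D_j) ≤ l(π(D), D_j) for every j ∈ S with strict inequality for some j ∈ S. -/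
/-- The `k`-th smallest element of a multiset of extended reals. -/
noncomputable def nthSmallest (M : Multiset EReal) (k : ℕ) : EReal :=
  (M.sort (· ≤ ·)).getD (k - 1) 0

theorem sorted_get_iff {β : Type*} [LinearOrder β] (P : β → Prop) [DecidablePred P]
    (hP : ∀ a b, a ≤ b → P b → P a) (d : β) :
    ∀ (l : List β), l.Pairwise (· ≤ ·) → ∀ i, i < l.length →
      (P (l.getD i d) ↔ i < l.countP (fun x => decide (P x))) := by
  intro l
  induction l with
  | nil => intro _ i hi; simp at hi
  | cons a t ih =>
    intro hs i hi
    rw [List.pairwise_cons] at hs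
    obtain ⟨ha, ht⟩ := hs
    by_cases h : P a
    · rw [List.countP_cons_of_pos (by simpa using h)]
      cases i with
      | zero => simp [h]
      | succ j =>
        have := ih ht j (by simpa using hi)
        simp only [List.getD_cons_succ, this]
        omega
    · have h0 : ∀ x ∈ t, ¬ P x := fun x hx hp => h (hP _ _ (ha x hx) hp)
      have hc : (a :: t).countP (fun x => decide (P x)) = 0 := by
        rw [List.countP_eq_zero]
        intro x hx
        rcases List.mem_cons.1 hx with rfl | hx
        · simpa using h
        · simpa using h0 x hx
      rw [hc]
      constructor
      · intro hp
        exfalso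
        rw [List.getD_eq_getElem _ _ hi] at hp
        rcases List.mem_cons.1 (List.getElem_mem hi) with hx | hx
        · rw [hx] at hp; exact h hp
        · exact h0 _ hx hp
      · intro hp; omega

theorem msort_get_iff {β : Type*} [LinearOrder β] (P : β → Prop) [DecidablePred P]
    (hP : ∀ a b, a ≤ b → P b → P a) (d : β) (M : Multiset β) (i : ℕ) (hi : i < M.card) :
    P ((M.sort (· ≤ ·)).getD i d) ↔ i < M.countP P := by
  have h := sorted_get_iff P hP d (M.sort (· ≤ ·)) (Multiset.pairwise_sort M (· ≤ ·)) i
    (by simpa using hi)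
  rw [h]
  conv_rhs => rw [← Multiset.sort_eq M (· ≤ ·), Multiset.coe_countP]

theorem loss_right (p q : ℝ) (hpq : p ≤ q) (S : Multiset ℝ) :
    (q - p) * (2 * (S.countP (fun y => y ≤ p) : ℝ) - S.card) ≤ loss q S - loss p S := by
  induction S using Multiset.induction_on with
  | empty => simp [loss]
  | cons a t ih =>
    simp only [loss, Multiset.map_cons, Multiset.sum_cons, Multiset.card_cons,
      Multiset.countP_cons] at ih ⊢
    have h2 := abs_sub_abs_le_abs_sub (p - a) (q - a)
    rw [show p - a - (q - a) = -(q - p) by ring, abs_neg, abs_of_nonneg (sub_nonneg.2 hpq)] at h2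
    split_ifs with h
    · rw [abs_of_nonneg (by linarith : 0 ≤ p - a), abs_of_nonneg (by linarith : 0 ≤ q - a)]
      push_cast
      nlinarith
    · push_cast
      nlinarith

theorem loss_left (p q : ℝ) (hpq : q ≤ p) (S : Multiset ℝ) :
    (p - q) * (S.card - 2 * (S.countP (fun y => y < p) : ℝ)) ≤ loss q S - loss p S := by
  induction S using Multiset.induction_on with
  | empty => simp [loss]
  | cons a t ih =>
    simp only [loss, Multiset.map_cons, Multiset.sum_cons, Multiset.card_cons,
      Multiset.countP_cons] at ih ⊢
    have h2 := abs_sub_abs_le_abs_sub (p - a) (q - a)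
    rw [show p - a - (q - a) = p - q by ring, abs_of_nonneg (sub_nonneg.2 hpq)] at h2
    split_ifs with h
    · push_cast
      nlinarith
    · rw [abs_of_nonpos (by linarith : p - a ≤ 0), abs_of_nonpos (by linarith : q - a ≤ 0)]
      push_cast
      nlinarith

theorem loss_lt_right_s11 (p q : ℝ) (S : Multiset ℝ) (hS : S ≠ 0) (hm : medHi S ≤ p) (hpq : p < q) :
    loss p S < loss q S := by
  have hc : 0 < S.card := Multiset.card_pos.2 hS
  have h := (msort_get_iff (fun y => y ≤ p) (fun a b h1 h2 => le_trans h1 h2) 0 S (S.card / 2)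
    (by omega)).1 hm
  have h' : S.card < 2 * S.countP (fun y => y ≤ p) := by omega
  have h'' : (S.card : ℝ) < 2 * (S.countP (fun y => y ≤ p) : ℝ) := by exact_mod_cast h'
  have := loss_right p q hpq.le S
  have := mul_pos (sub_pos.2 hpq) (sub_pos.2 h'')
  linarith

theorem loss_lt_left_s11 (p q : ℝ) (S : Multiset ℝ) (hS : S ≠ 0) (hm : p ≤ medLo S) (hpq : q < p) :
    loss p S < loss q S := by
  have hc : 0 < S.card := Multiset.card_pos.2 hS
  have h := mt (msort_get_iff (fun y => y < p) (fun a b h1 h2 => lt_of_le_of_lt h1 h2) 0 S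
    ((S.card - 1) / 2) (by omega)).2 (not_lt.2 hm)
  have h' : 2 * S.countP (fun y => y < p) < S.card := by omega
  have h'' : 2 * (S.countP (fun y => y < p) : ℝ) < (S.card : ℝ) := by exact_mod_cast h'
  have := loss_left p q hpq.le S
  have := mul_pos (sub_pos.2 hpq) (sub_pos.2 h'')
  linarith

theorem nth_mono {n : ℕ} (hn : 1 ≤ n) (α : Fin (n - 1) → EReal) (f g : Fin n → EReal)
    (P : EReal → Prop) [DecidablePred P] (hP : ∀ a b, a ≤ b → P b → P a)
    (hfg : ∀ i, P (f i) → P (g i))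
    (h : P (nthSmallest (Finset.univ.val.map f + Finset.univ.val.map α) n)) :
    P (nthSmallest (Finset.univ.val.map g + Finset.univ.val.map α) n) := by
  unfold nthSmallest at *
  rw [msort_get_iff P hP _ _ _ (by simp; omega)] at h ⊢
  refine lt_of_lt_of_le h ?_
  rw [Multiset.countP_add, Multiset.countP_add]
  refine Nat.add_le_add_right ?_ _
  rw [Multiset.countP_map, Multiset.countP_map]
  exact Multiset.card_le_card (Multiset.monotone_filter_right _ hfg)

/-- Theorem 5: on the domain where every agent's report has a
single-point median interval (a unique optimal location `y_i*`), the mechanism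
`π(D) = med(y_1*,…,y_n*,α_1,…,α_{n-1})` is strong group strategyproof w.r.t.
manipulation, replication and hiding: no coalition can deviate (within the domain) so
that no member is strictly worse off and some member is strictly better off. -/
theorem stmt_11 (n : ℕ) (hn : 1 ≤ n) (α : Fin (n - 1) → EReal)
    (π : (Fin n → Multiset ℝ) → ℝ)
    (hπ : ∀ D : Fin n → Multiset ℝ, (∀ j, D j ≠ 0 ∧ medLo (D j) = medHi (D j)) →
      (π D : EReal) =
        nthSmallest
          ((Finset.univ.val.map fun i : Fin n => ((medLo (D i) : ℝ) : EReal)) +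
            Finset.univ.val.map α) n) :
    ¬ ∃ (S : Finset (Fin n)) (D D' : Fin n → Multiset ℝ),
        S.Nonempty ∧ (∀ j, D j ≠ 0 ∧ medLo (D j) = medHi (D j)) ∧
        (∀ j ∈ S, D' j ≠ 0 ∧ medLo (D' j) = medHi (D' j)) ∧
        (∀ j ∈ S, loss (π fun k => if k ∈ S then D' k else D k) (D j)
            ≤ loss (π D) (D j)) ∧
        (∃ j ∈ S, loss (π fun k => if k ∈ S then D' k else D k) (D j)
            < loss (π D) (D j)) := by

  rintro ⟨S, D, D', -, hD, hD', hle, j, hj, hlt⟩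
  set E : Fin n → Multiset ℝ := fun k => if k ∈ S then D' k else D k with hE
  have hEd : ∀ j, E j ≠ 0 ∧ medLo (E j) = medHi (E j) := by
    intro k
    by_cases hk : k ∈ S
    · simpa [hE, hk] using hD' k hk
    · simpa [hE, hk] using hD k
  have hEk : ∀ k, k ∉ S → E k = D k := fun k hk => by simp [hE, hk]
  have h1 := hπ D hD
  have h2 := hπ E hEd
  rcases lt_trichotomy (π D) (π E) with h | h | h
  · have hS : ∀ k ∈ S, π D < medLo (D k) := by
      intro k hk
      by_contra hc
      have := loss_lt_right_s11 (π D) (π E) (D k) (hD k).1 ((hD k).2 ▸ not_lt.1 hc) h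
      exact absurd (hle k hk) (not_le.2 this)
    have := nth_mono hn α (fun i => ((medLo (D i) : ℝ) : EReal))
      (fun i => ((medLo (E i) : ℝ) : EReal)) (fun x => x ≤ (π D : EReal))
      (fun a b h1 h2 => le_trans h1 h2) ?_ h1.ge
    · rw [← h2] at this
      exact absurd (EReal.coe_le_coe_iff.1 this) (not_le.2 h)
    · intro i hi
      by_cases hk : i ∈ S
      · exact absurd (EReal.coe_le_coe_iff.1 hi) (not_le.2 (hS i hk))
      · simpa only [hEk i hk] using hi
  · rw [h] at hlt; exact lt_irrefl _ hlt
  · have hS : ∀ k ∈ S, medLo (D k) < π D := by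
      intro k hk
      by_contra hc
      have := loss_lt_left_s11 (π D) (π E) (D k) (hD k).1 (not_lt.1 hc) h
      exact absurd (hle k hk) (not_le.2 this)
    have := nth_mono hn α (fun i => ((medLo (E i) : ℝ) : EReal))
      (fun i => ((medLo (D i) : ℝ) : EReal)) (fun x => x < (π D : EReal))
      (fun a b h1 h2 => lt_of_le_of_lt h1 h2) ?_ (h2 ▸ EReal.coe_lt_coe_iff.2 h)
    · rw [← h1] at this
      exact lt_irrefl _ this
    · intro i hi
      by_cases hk : i ∈ S
      · exact EReal.coe_lt_coe_iff.2 (hS i hk)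
      · simpa only [hEk i hk] using hi
end

section
/- Let n = 3, let β ∈ [0,1], and let α1 ≤ α2 be extended reals such that either α1 < α2, or α1 = α2 ∈ ℝ. Define the mechanism π on profiles D = (D_1,D_2,D_3) of nonempty finite multisets of reals by π(D) = med(y_1*,y_2*,y_3*,α1,α2), the 3rd smallest of these 5 extended-real values (always a real number), where y_i* = β·y_i^0 + (1−β)·y_i^1 and [y_i^0,y_i^1] = med(D_i). Then π is NOT strong group strategyproof w.r.t. manipulation, replication, and hiding: there exist a coalition S of agents, a profile D, and nonempty finite multisets (D_j′)_{j∈S} such that l(π(D_S′,D_{−S}), D_j) ≤ l(π(D), D_j) for every j ∈ S with strict inequality for some j ∈ S. -/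
theorem nth_of_sorted (a b c d e : EReal) (h1 : a ≤ b) (h2 : b ≤ c) (h3 : c ≤ d) (h4 : d ≤ e)
    (M : Multiset EReal) (hM : M = {a, b, c, d, e}) : nthSmallest M 3 = c := by
  have hM' : M = (([a, b, c, d, e] : List EReal) : Multiset EReal) := hM
  have hs : M.sort (· ≤ ·) = [a, b, c, d, e] := by
    apply List.Perm.eq_of_pairwise' (r := (· ≤ ·))
    · exact Multiset.pairwise_sort _ _
    · simp only [List.pairwise_cons]
      simp
      refine ⟨⟨h1, ?_, ?_, ?_⟩, ⟨h2, ?_, ?_⟩, ⟨h3, ?_⟩, h4⟩ <;> order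
    · rw [← Multiset.coe_eq_coe, Multiset.sort_eq, hM']
  unfold nthSmallest
  rw [hs]
  rfl

theorem medLo_single (x : ℝ) : medLo {x} = x := by simp [medLo]
theorem medHi_single (x : ℝ) : medHi {x} = x := by simp [medHi]

theorem sort_pair (p q : ℝ) (h : p ≤ q) : Multiset.sort ({p, q} : Multiset ℝ) (· ≤ ·) = [p, q] := by
  apply List.Perm.eq_of_pairwise' (r := (· ≤ ·))
  · exact Multiset.pairwise_sort _ _
  · simp [h]
  · rw [← Multiset.coe_eq_coe, Multiset.sort_eq]
    rfl

theorem medLo_pair (p q : ℝ) (h : p ≤ q) : medLo {p, q} = p := by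
  rw [medLo, sort_pair p q h]; simp
theorem medHi_pair (p q : ℝ) (h : p ≤ q) : medHi {p, q} = q := by
  rw [medHi, sort_pair p q h]; simp

theorem loss_single (x w : ℝ) : loss x {w} = |x - w| := by simp [loss]
theorem loss_pair (x p q : ℝ) (h1 : p ≤ x) (h2 : x ≤ q) : loss x {p, q} = q - p := by
  simp [loss]
  rw [abs_of_nonneg (by linarith), abs_of_nonpos (by linarith)]
  ring

theorem core (β : ℝ) (hβ : β ∈ Set.Icc (0 : ℝ) 1) (α1 α2 : EReal)
    (π : (Fin 3 → Multiset ℝ) → ℝ)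
    (hπ : ∀ D : Fin 3 → Multiset ℝ, (∀ j, D j ≠ 0) →
      (π D : EReal) =
        nthSmallest
          ((Finset.univ.val.map fun i : Fin 3 =>
              ((β * medLo (D i) + (1 - β) * medHi (D i) : ℝ) : EReal)) +
            {α1, α2}) 3)
    (p q w z : ℝ) (hpq : p < q) (hw1 : p ≤ w) (hw2 : w ≤ q)
    (hne : β * p + (1 - β) * q ≠ w)
    (H : ∀ y : ℝ, p ≤ y → y ≤ q →
      nthSmallest ({(y : EReal), (w : EReal), (z : EReal), α1, α2}) 3 = y) :
    ∃ (S : Finset (Fin 3)) (D D' : Fin 3 → Multiset ℝ),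
      (∀ j, D j ≠ 0) ∧ (∀ j ∈ S, D' j ≠ 0) ∧
      (∀ j ∈ S, loss (π fun k => if k ∈ S then D' k else D k) (D j)
          ≤ loss (π D) (D j)) ∧
      (∃ j ∈ S, loss (π fun k => if k ∈ S then D' k else D k) (D j)
          < loss (π D) (D j)) := by
  obtain ⟨hb0, hb1⟩ := hβ
  have key : ∀ A : Multiset ℝ, A ≠ 0 → p ≤ β * medLo A + (1 - β) * medHi A →
      β * medLo A + (1 - β) * medHi A ≤ q →
      π ![A, {w}, {z}] = β * medLo A + (1 - β) * medHi A := by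
    intro A hA h1 h2
    have h := hπ ![A, {w}, {z}] (by intro j; fin_cases j <;> simp [hA])
    have e : ((Finset.univ.val.map fun i : Fin 3 =>
              ((β * medLo ((![A, {w}, {z}] : Fin 3 → Multiset ℝ) i)
                + (1 - β) * medHi ((![A, {w}, {z}] : Fin 3 → Multiset ℝ) i) : ℝ) : EReal)) +
            {α1, α2}) = {((β * medLo A + (1 - β) * medHi A : ℝ) : EReal),
              (w : EReal), (z : EReal), α1, α2} := by
      have ew : β * w + (1 - β) * w = w := by ring
      have ez : β * z + (1 - β) * z = z := by ring
      have : (Finset.univ.val : Multiset (Fin 3)) = {0, 1, 2} := rfl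
      rw [this]
      simp only [Multiset.insert_eq_cons, Multiset.map_cons, Multiset.map_singleton,
        Multiset.cons_add, Multiset.singleton_add]
      simp only [Matrix.cons_val, medLo_single, medHi_single, ew, ez]
    rw [e, H _ h1 h2] at h
    exact_mod_cast h
  set m := β * p + (1 - β) * q with hm
  have hm1 : p ≤ m := by nlinarith
  have hm2 : m ≤ q := by nlinarith
  have k1 : π ![{p, q}, {w}, {z}] = m := by
    have := key {p, q} (by simp)
    rw [medLo_pair p q hpq.le, medHi_pair p q hpq.le] at this
    exact this hm1 hm2
  have k2 : π ![{w}, {w}, {z}] = w := by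
    have := key {w} (by simp)
    rw [medLo_single, medHi_single] at this
    have ew : β * w + (1 - β) * w = w := by ring
    rw [ew] at this
    exact this hw1 hw2
  have ef : (fun k => if k ∈ ({0, 1} : Finset (Fin 3)) then
      (![{w}, {w}, {z}] : Fin 3 → Multiset ℝ) k else
      (![{p, q}, {w}, {z}] : Fin 3 → Multiset ℝ) k) = ![{w}, {w}, {z}] := by
    funext k
    fin_cases k <;> simp
  have hlt : loss w {w} < loss m {w} := by
    rw [loss_single, loss_single, sub_self, abs_zero]
    exact abs_pos.mpr (sub_ne_zero.mpr hne)
  refine ⟨{0, 1}, ![{p, q}, {w}, {z}], ![{w}, {w}, {z}], ?_, ?_, ?_, ?_⟩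
  · intro j; fin_cases j <;> simp
  · intro j _; fin_cases j <;> simp
  · rw [ef, k1, k2]
    intro j hj
    simp only [Finset.mem_insert, Finset.mem_singleton] at hj
    rcases hj with rfl | rfl
    · show loss w {p, q} ≤ loss m {p, q}
      rw [loss_pair w p q hw1 hw2, loss_pair m p q hm1 hm2]
    · exact hlt.le
  · rw [ef, k1, k2]
    exact ⟨1, by simp, hlt⟩

/-- Example 2: for `n = 3`, any generalized-median mechanism
`π(D) = med(y_1*,y_2*,y_3*,α1,α2)` with `α1 < α2`, or `α1 = α2` finite, is NOT strong
group strategyproof w.r.t. manipulation, replication and hiding. -/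
theorem stmt_13 (β : ℝ) (hβ : β ∈ Set.Icc (0 : ℝ) 1) (α1 α2 : EReal) (hα : α1 ≤ α2)
    (hcase : α1 < α2 ∨ (α1 = α2 ∧ ∃ r : ℝ, α1 = (r : EReal)))
    (π : (Fin 3 → Multiset ℝ) → ℝ)
    (hπ : ∀ D : Fin 3 → Multiset ℝ, (∀ j, D j ≠ 0) →
      (π D : EReal) =
        nthSmallest
          ((Finset.univ.val.map fun i : Fin 3 =>
              ((β * medLo (D i) + (1 - β) * medHi (D i) : ℝ) : EReal)) +
            {α1, α2}) 3) :
    ∃ (S : Finset (Fin 3)) (D D' : Fin 3 → Multiset ℝ),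
      (∀ j, D j ≠ 0) ∧ (∀ j ∈ S, D' j ≠ 0) ∧
      (∀ j ∈ S, loss (π fun k => if k ∈ S then D' k else D k) (D j)
          ≤ loss (π D) (D j)) ∧
      (∃ j ∈ S, loss (π fun k => if k ∈ S then D' k else D k) (D j)
          < loss (π D) (D j)) := by
  rcases hcase with hlt | ⟨rfl, r, rfl⟩
  · obtain ⟨p, h1, h2⟩ := EReal.lt_iff_exists_real_btwn.mp hlt
    obtain ⟨q, h3, h4⟩ := EReal.lt_iff_exists_real_btwn.mp h2
    have hpq : p < q := by exact_mod_cast h3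
    by_cases hb : β = 0
    · refine core β hβ α1 α2 π hπ p q p q hpq le_rfl hpq.le ?_ ?_
      · subst hb; intro h; linarith
      · intro y hy1 hy2
        refine nth_of_sorted α1 p y q α2 h1.le (by exact_mod_cast hy1) (by exact_mod_cast hy2)
          h4.le _ ?_
        simp only [Multiset.insert_eq_cons, ← Multiset.singleton_add]
        abel
    · refine core β hβ α1 α2 π hπ p q q p hpq hpq.le le_rfl ?_ ?_
      · intro h
        have : β * (q - p) = 0 := by linarith
        rcases mul_eq_zero.mp this with h | h
        · exact hb h
        · linarith
      · intro y hy1 hy2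
        refine nth_of_sorted α1 p y q α2 h1.le (by exact_mod_cast hy1) (by exact_mod_cast hy2)
          h4.le _ ?_
        simp only [Multiset.insert_eq_cons, ← Multiset.singleton_add]
        abel
  · by_cases hb : β = 0
    · refine core β hβ r r π hπ (r - 1) r (r - 1) (r - 1) (by linarith) le_rfl (by linarith) ?_ ?_
      · subst hb; intro h; linarith
      · intro y hy1 hy2
        refine nth_of_sorted ((r - 1 : ℝ) : EReal) ((r - 1 : ℝ) : EReal) y r r le_rfl
          (by exact_mod_cast hy1) (by exact_mod_cast hy2) le_rfl _ ?_
        simp only [Multiset.insert_eq_cons, ← Multiset.singleton_add]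
        abel
    · refine core β hβ r r π hπ r (r + 1) (r + 1) (r + 1) (by linarith) (by linarith) le_rfl ?_ ?_
      · intro h; apply hb; linarith
      · intro y hy1 hy2
        refine nth_of_sorted r r y ((r + 1 : ℝ) : EReal) ((r + 1 : ℝ) : EReal) le_rfl
          (by exact_mod_cast hy1) (EReal.coe_le_coe_iff.mpr hy2) le_rfl _ ?_
        simp only [Multiset.insert_eq_cons, ← Multiset.singleton_add]
        abel
end

section
/- Fix n ≥ 1 and an odd m ≥ 1, and let π be a mechanism on profiles D = (D_1,…,D_n) of size-m multisets of reals that is anonymous and strategyproof w.r.t. manipulation (for every agent i, every such profile D, and every size-m multiset D_i′, l(π(D),D_i) ≤ l(π(D_i′,D_{−i}),D_i)). Then for every agent i, every fixed tuple D_{−i} of the other agents' size-m reports, and every y* ∈ ℝ, there exist s, h ∈ ℝ with (s < y* < h or s = h) such that for every size-m multiset D_i whose median is y*: π(D_i,D_{−i}) = s if l(s,D_i) < l(h,D_i), π(D_i,D_{−i}) = h if l(s,D_i) > l(h,D_i), and π(D_i,D_{−i}) ∈ {s,h} if l(s,D_i) = l(h,D_i). -/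
/-- Anonymity, on profiles of size-`m` multisets. -/
def AnonymousM (n m : ℕ) (π : (Fin n → Multiset ℝ) → ℝ) : Prop :=
  ∀ D : Fin n → Multiset ℝ, (∀ j, (D j).card = m) →
    ∀ σ : Equiv.Perm (Fin n), π (D ∘ σ) = π D

/-- Strategyproofness w.r.t. manipulation: an agent may replace her size-`m` report by
any other size-`m` multiset. -/
def StrategyproofM (n m : ℕ) (π : (Fin n → Multiset ℝ) → ℝ) : Prop :=
  ∀ (i : Fin n) (D : Fin n → Multiset ℝ), (∀ j, (D j).card = m) →
    ∀ Di' : Multiset ℝ, Di'.card = m →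
      loss (π D) (D i) ≤ loss (π (Function.update D i Di')) (D i)

/-- Efficiency, on profiles of size-`m` multisets. -/
def EfficientM (n m : ℕ) (π : (Fin n → Multiset ℝ) → ℝ) : Prop :=
  ∀ D : Fin n → Multiset ℝ, (∀ j, (D j).card = m) →
    ¬ ∃ x : ℝ, (∀ j, loss x (D j) ≤ loss (π D) (D j)) ∧
        ∃ j, loss x (D j) < loss (π D) (D j)

theorem aux_loss_cons (x a : ℝ) (S : Multiset ℝ) : loss x (a ::ₘ S) = |x - a| + loss x S := by
  simp [loss]

theorem aux_loss_add (x : ℝ) (S T : Multiset ℝ) : loss x (S + T) = loss x S + loss x T := by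
  simp [loss]

theorem aux_loss_lip (x z : ℝ) (A : Multiset ℝ) :
    loss z A ≤ loss x A + A.card * |x - z| := by
  induction A using Multiset.induction_on with
  | empty => simp [loss]
  | cons a S ih =>
    rw [aux_loss_cons, aux_loss_cons, Multiset.card_cons]
    have h1 : |z - a| ≤ |x - a| + |x - z| := by
      have := abs_sub_le z x a
      rw [abs_sub_comm z x] at this
      linarith
    push_cast
    linarith

theorem aux_loss_left (x z : ℝ) (hxz : x ≤ z) (B : Multiset ℝ) (hB : ∀ b ∈ B, z ≤ b) :
    loss x B = loss z B + B.card * (z - x) := by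
  induction B using Multiset.induction_on with
  | empty => simp [loss]
  | cons a S ih =>
    rw [aux_loss_cons, aux_loss_cons, Multiset.card_cons,
      ih (fun b hb => hB b (Multiset.mem_cons_of_mem hb))]
    have h := hB a (Multiset.mem_cons_self a S)
    rw [abs_of_nonpos (by linarith), abs_of_nonpos (by linarith)]
    push_cast
    ring

theorem aux_loss_right (x z : ℝ) (hxz : z ≤ x) (B : Multiset ℝ) (hB : ∀ b ∈ B, b ≤ z) :
    loss x B = loss z B + B.card * (x - z) := by
  induction B using Multiset.induction_on with
  | empty => simp [loss]
  | cons a S ih =>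
    rw [aux_loss_cons, aux_loss_cons, Multiset.card_cons,
      ih (fun b hb => hB b (Multiset.mem_cons_of_mem hb))]
    have h := hB a (Multiset.mem_cons_self a S)
    rw [abs_of_nonneg (by linarith), abs_of_nonneg (by linarith)]
    push_cast
    ring

theorem aux_decomp (k : ℕ) (S : Multiset ℝ) (hS : S.card = 2 * k + 1) :
    (∃ A B : Multiset ℝ, S = A + B ∧ A.card = k ∧ B.card = k + 1 ∧ ∀ b ∈ B, medLo S ≤ b) ∧
    (∃ A B : Multiset ℝ, S = A + B ∧ A.card = k ∧ B.card = k + 1 ∧ ∀ b ∈ B, b ≤ medLo S) := by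
  have hlen : (S.sort (· ≤ ·)).length = 2 * k + 1 := by simp [hS]
  have hsrt : (S.sort (· ≤ ·)).Pairwise (· ≤ ·) := Multiset.pairwise_sort S _
  have hco : ((S.sort (· ≤ ·) : List ℝ) : Multiset ℝ) = S := Multiset.sort_eq S _
  have hmed : medLo S = (S.sort (· ≤ ·)).getD k 0 := by
    unfold medLo
    rw [hS]
    congr 1
    omega
  rw [hmed]
  generalize S.sort (· ≤ ·) = L at *
  have hk : k < L.length := by omega
  have hget : L.getD k 0 = L[k] := by simp [hk]
  rw [hget]
  rw [List.pairwise_iff_getElem] at hsrt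
  have hmono : ∀ (a b : ℕ) (ha : a < L.length) (hb : b < L.length), a ≤ b → L[a] ≤ L[b] := by
    intro a b ha hb hab
    rcases hab.eq_or_lt with h | h
    · subst h; exact le_rfl
    · exact hsrt a b ha hb h
  constructor
  · refine ⟨(L.take k : List ℝ), (L.drop k : List ℝ), ?_, ?_, ?_, ?_⟩
    · rw [Multiset.coe_add, List.take_append_drop, hco]
    · simp; omega
    · simp; omega
    · intro b hb
      rw [Multiset.mem_coe, List.mem_iff_getElem] at hb
      obtain ⟨j, hj, rfl⟩ := hb
      rw [List.getElem_drop]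
      exact hmono _ _ _ _ (by omega)
  · refine ⟨(L.drop (k+1) : List ℝ), (L.take (k+1) : List ℝ), ?_, ?_, ?_, ?_⟩
    · rw [add_comm, Multiset.coe_add, List.take_append_drop, hco]
    · simp; omega
    · simp; omega
    · intro b hb
      rw [Multiset.mem_coe, List.mem_iff_getElem] at hb
      obtain ⟨j, hj, rfl⟩ := hb
      rw [List.getElem_take]
      have : j < k + 1 := by simp at hj; omega
      exact hmono _ _ _ _ (by omega)

theorem aux_strict_left (k : ℕ) (S : Multiset ℝ) (hS : S.card = 2 * k + 1) (x z : ℝ)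
    (hxz : x < z) (hz : z ≤ medLo S) : loss z S < loss x S := by
  obtain ⟨⟨A, B, hAB, hA, hB, hb⟩, -⟩ := aux_decomp k S hS
  have h1 := aux_loss_lip x z A
  have h2 := aux_loss_left x z hxz.le B (fun b h => hz.trans (hb b h))
  rw [hAB, aux_loss_add, aux_loss_add, h2]
  rw [hA, abs_of_neg (by linarith)] at h1
  rw [hB]
  push_cast
  nlinarith

theorem aux_strict_right (k : ℕ) (S : Multiset ℝ) (hS : S.card = 2 * k + 1) (x z : ℝ)
    (hxz : z < x) (hz : medLo S ≤ z) : loss z S < loss x S := by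
  obtain ⟨-, ⟨A, B, hAB, hA, hB, hb⟩⟩ := aux_decomp k S hS
  have h1 := aux_loss_lip x z A
  have h2 := aux_loss_right x z hxz.le B (fun b h => (hb b h).trans hz)
  rw [hAB, aux_loss_add, aux_loss_add, h2]
  rw [hA, abs_of_pos (by linarith)] at h1
  rw [hB]
  push_cast
  nlinarith

theorem aux_loss_replicate (m : ℕ) (x y : ℝ) :
    loss x (Multiset.replicate m y) = m * |x - y| := by
  simp [loss]

/-- The single-agent core: `f` picks a minimiser of the loss over its own range. -/
theorem aux_core (k : ℕ) (f : Multiset ℝ → ℝ)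
    (hf : ∀ S T : Multiset ℝ, S.card = 2 * k + 1 → T.card = 2 * k + 1 →
      loss (f S) S ≤ loss (f T) S) (y : ℝ) :
    ∃ s h : ℝ, (s < y ∧ y < h ∨ s = h) ∧
      ∀ S : Multiset ℝ, S.card = 2 * k + 1 → medLo S = y →
        (loss s S < loss h S → f S = s) ∧
        (loss h S < loss s S → f S = h) ∧
        (loss s S = loss h S → f S = s ∨ f S = h) := by
  set R : Set ℝ := {r | ∃ T : Multiset ℝ, T.card = 2 * k + 1 ∧ f T = r} with hR
  have hfR : ∀ S : Multiset ℝ, S.card = 2 * k + 1 → ∀ r ∈ R, loss (f S) S ≤ loss r S := by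
    rintro S hS r ⟨T, hT, rfl⟩
    exact hf S T hS hT
  have hmem : ∀ S : Multiset ℝ, S.card = 2 * k + 1 → f S ∈ R := fun S hS => ⟨S, hS, rfl⟩
  have hclosed : IsClosed R := by
    rw [← closure_subset_iff_isClosed]
    intro z hz
    have hc : (Multiset.replicate (2 * k + 1) z).card = 2 * k + 1 := by simp
    have hzero : |f (Multiset.replicate (2 * k + 1) z) - z| ≤ 0 := by
      refine le_of_forall_pos_le_add fun ε hε => ?_
      obtain ⟨r, hr, hd⟩ := Metric.mem_closure_iff.1 hz ε hε
      have h1 := hfR _ hc r hr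
      rw [aux_loss_replicate, aux_loss_replicate] at h1
      have h2 := le_of_mul_le_mul_left h1 (by positivity)
      rw [Real.dist_eq, abs_sub_comm] at hd
      linarith
    have : f (Multiset.replicate (2 * k + 1) z) = z := by
      have := abs_nonpos_iff.1 hzero
      linarith
    exact ⟨_, hc, this⟩
  have hL : (R ∩ Set.Iic y).Nonempty → ∃ s ∈ R, s ≤ y ∧ ∀ r ∈ R, r ≤ y → r ≤ s := by
    intro hne
    have hb : BddAbove (R ∩ Set.Iic y) := ⟨y, fun r hr => hr.2⟩
    have := (hclosed.inter isClosed_Iic).csSup_mem hne hb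
    exact ⟨_, this.1, this.2, fun r hr hry => le_csSup hb ⟨hr, hry⟩⟩
  have hH : (R ∩ Set.Ici y).Nonempty → ∃ h ∈ R, y ≤ h ∧ ∀ r ∈ R, y ≤ r → h ≤ r := by
    intro hne
    have hb : BddBelow (R ∩ Set.Ici y) := ⟨y, fun r hr => hr.2⟩
    have := (hclosed.inter isClosed_Ici).csInf_mem hne hb
    exact ⟨_, this.1, this.2, fun r hr hry => csInf_le hb ⟨hr, hry⟩⟩
  have keyL : ∀ s ∈ R, s ≤ y → (∀ r ∈ R, r ≤ y → r ≤ s) → ∀ S : Multiset ℝ,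
      S.card = 2 * k + 1 → medLo S = y → f S ≤ y → f S = s := by
    intro s hs hsy hmax S hS hmed hle
    by_contra hne
    have hlt : f S < s := lt_of_le_of_ne (hmax _ (hmem S hS) hle) hne
    have := aux_strict_left k S hS (f S) s hlt (hmed ▸ hsy)
    exact absurd (hfR S hS s hs) (not_le.2 this)
  have keyH : ∀ h ∈ R, y ≤ h → (∀ r ∈ R, y ≤ r → h ≤ r) → ∀ S : Multiset ℝ,
      S.card = 2 * k + 1 → medLo S = y → y ≤ f S → f S = h := by
    intro s hs hsy hmax S hS hmed hle
    by_contra hne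
    have hlt : s < f S := lt_of_le_of_ne (hmax _ (hmem S hS) hle) (Ne.symm hne)
    have := aux_strict_right k S hS (f S) s hlt (hmed ▸ hsy)
    exact absurd (hfR S hS s hs) (not_le.2 this)
  have single : ∀ s : ℝ, (∀ S : Multiset ℝ, S.card = 2 * k + 1 → medLo S = y → f S = s) →
      ∃ s h : ℝ, (s < y ∧ y < h ∨ s = h) ∧
      ∀ S : Multiset ℝ, S.card = 2 * k + 1 → medLo S = y →
        (loss s S < loss h S → f S = s) ∧
        (loss h S < loss s S → f S = h) ∧
        (loss s S = loss h S → f S = s ∨ f S = h) := by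
    intro s hs
    exact ⟨s, s, Or.inr rfl, fun S hS hmed =>
      ⟨fun _ => hs S hS hmed, fun _ => hs S hS hmed, fun _ => Or.inl (hs S hS hmed)⟩⟩
  by_cases hneL : (R ∩ Set.Iic y).Nonempty
  · obtain ⟨s, hs, hsy, hsmax⟩ := hL hneL
    by_cases hneH : (R ∩ Set.Ici y).Nonempty
    · obtain ⟨h, hh, hyh, hhmin⟩ := hH hneH
      by_cases hyR : y ∈ R
      · have e1 : s = y := le_antisymm hsy (hsmax y hyR le_rfl)
        have e2 : h = y := le_antisymm (hhmin y hyR le_rfl) hyh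
        refine single y fun S hS hmed => ?_
        rcases le_total (f S) y with hle | hle
        · rw [keyL s hs hsy hsmax S hS hmed hle, e1]
        · rw [keyH h hh hyh hhmin S hS hmed hle, e2]
      · have hs' : s < y := lt_of_le_of_ne hsy (fun e => hyR (e ▸ hs))
        have hh' : y < h := lt_of_le_of_ne hyh (fun e => hyR (e ▸ hh))
        refine ⟨s, h, Or.inl ⟨hs', hh'⟩, fun S hS hmed => ?_⟩
        have hor : f S = s ∨ f S = h := by
          rcases le_total (f S) y with hle | hle
          · exact Or.inl (keyL s hs hsy hsmax S hS hmed hle)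
          · exact Or.inr (keyH h hh hyh hhmin S hS hmed hle)
        refine ⟨fun hlt => ?_, fun hlt => ?_, fun _ => hor⟩
        · rcases hor with e | e
          · exact e
          · have := hfR S hS s hs
            rw [e] at this
            exact absurd this (not_le.2 hlt)
        · rcases hor with e | e
          · have := hfR S hS h hh
            rw [e] at this
            exact absurd this (not_le.2 hlt)
          · exact e
    · refine single s fun S hS hmed => keyL s hs hsy hsmax S hS hmed ?_
      by_contra hc
      exact hneH ⟨f S, hmem S hS, (not_le.1 hc).le⟩
  · have hneH : (R ∩ Set.Ici y).Nonempty := by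
      have hm0 := hmem (Multiset.replicate (2 * k + 1) y) (by simp)
      rcases le_total (f (Multiset.replicate (2 * k + 1) y)) y with hle | hle
      · exact absurd ⟨_, hm0, hle⟩ hneL
      · exact ⟨_, hm0, hle⟩
    obtain ⟨h, hh, hyh, hhmin⟩ := hH hneH
    refine single h fun S hS hmed => keyH h hh hyh hhmin S hS hmed ?_
    by_contra hc
    exact hneL ⟨f S, hmem S hS, (not_le.1 hc).le⟩

/-- Lemma 5, odd case: for odd `m`, an anonymous mechanism that is
strategyproof w.r.t. manipulation has, fixing the other agents' size-`m` reports and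
agent `i`'s (unique) median `y*`, at most two possible outputs `s, h` with
`s < y* < h` or `s = h`, selected as in Eqn. (7). -/
theorem stmt_14 (n m : ℕ) (hn : 1 ≤ n) (hm : Odd m) (π : (Fin n → Multiset ℝ) → ℝ)
    (hanon : AnonymousM n m π) (hsp : StrategyproofM n m π)
    (i : Fin n) (D : Fin n → Multiset ℝ) (hD : ∀ j, j ≠ i → (D j).card = m)
    (ystar : ℝ) :
    ∃ s h : ℝ, (s < ystar ∧ ystar < h ∨ s = h) ∧
      ∀ Di : Multiset ℝ, Di.card = m → medLo Di = ystar →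
        (loss s Di < loss h Di → π (Function.update D i Di) = s) ∧
        (loss h Di < loss s Di → π (Function.update D i Di) = h) ∧
        (loss s Di = loss h Di →
          π (Function.update D i Di) = s ∨ π (Function.update D i Di) = h) := by
  obtain ⟨k, rfl⟩ := hm
  refine aux_core k (fun S => π (Function.update D i S)) ?_ ystar
  intro S T hS hT
  have hcard : ∀ j, (Function.update D i S j).card = 2 * k + 1 := by
    intro j
    by_cases hj : j = i
    · subst hj; simpa using hS
    · rw [Function.update_of_ne hj]; exact hD j hj
  have := hsp i (Function.update D i S) hcard T hT
  simpa using this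
end
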